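/- arXiv:2505.17595 — 4 statements merged into one kernel-verified Lean document; each statement's English description precedes it below -/
import Mathlib

section
/- Let a < b be real numbers and k ≥ 1 a natural number. Set s* = (b − a)/2^k and z* = −(a/s* + 1/2). Then for every scale s > 0 and every zero-point z ∈ ℝ, ∫_a^b (Q_{s,z}(x) − x)² dx ≥ ∫_a^b (Q_{s*,z*}(x) − x)² dx; that is, the parameters s*, z* minimize the expected squared quantization error E_{x∼U(a,b)}[(Q_{s,z}(x) − x)²] of a k-bit uniform quantizer when x is drawn uniformly from [a, b]. -/
/-!
Write `N = 2 ^ k`, `h = (b - a) / N` and `r = h / 2`, and let `bump r c x = max 0 (r² - (x - c)²)`.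
A quantizer with levels `c₀, …, c_{N-1}` satisfies pointwise
`(Q x - x)² ≥ r² - ∑ⱼ bump r cⱼ x`, because the bump at the level `Q x` is already at least
`r² - (x - Q x)²` and the other bumps are nonnegative (`sub_sum_bump_le`). Since each bump has total
integral `4 r³ / 3`, integrating gives `∫ (Q x - x)² ≥ r² (b - a) - N · 4 r³ / 3` whatever the
levels are. For the parameters `s*`, `z*` the levels are the midpoints of the `N` equal cells of
`[a, b]`, so the bumps have non-overlapping supports inside `[a, b]`, and both the pointwise bound
(`uniformQuant_star_sq`) and the integrated one (`integral_bump_eq`) are equalities.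
-/

open scoped BigOperators

/-- The `k`-bit uniform quantizer with scale `s` and zero-point `z`:
`Q_{s,z}(x) = s * (clip(⌊x/s + z⌉, 0, 2^k - 1) - z)`, where `⌊y⌉ = ⌊y + 1/2⌋`. -/
noncomputable def uniformQuant (s z : ℝ) (k : ℕ) (x : ℝ) : ℝ :=
  s * ((↑(max 0 (min (⌊x / s + z + 1/2⌋) ((2 : ℤ) ^ k - 1))) : ℝ) - z)

/-- The positive part of the downward parabola `r² - (x - c)²`, supported on `[c - r, c + r]`. -/
noncomputable def bump (r c x : ℝ) : ℝ := max 0 (r ^ 2 - (x - c) ^ 2)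

lemma bump_nonneg (r c x : ℝ) : 0 ≤ bump r c x := le_max_left _ _

lemma continuous_bump (r c : ℝ) : Continuous (bump r c) := by
  unfold bump; fun_prop

lemma intervalIntegrable_bump (r c a b : ℝ) :
    IntervalIntegrable (bump r c) MeasureTheory.volume a b :=
  (continuous_bump r c).intervalIntegrable a b

lemma bump_eq_zero {r c x : ℝ} (hr : 0 ≤ r) (h : r ≤ |x - c|) : bump r c x = 0 := by
  have : r ^ 2 ≤ (x - c) ^ 2 := by
    rw [← sq_abs (x - c)]; gcongr
  exact max_eq_left (by linarith)

lemma bump_eq {r c x : ℝ} (h : |x - c| ≤ r) : bump r c x = r ^ 2 - (x - c) ^ 2 := by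
  have : (x - c) ^ 2 ≤ r ^ 2 := by
    rw [← sq_abs (x - c)]; gcongr
  exact max_eq_right (by linarith)

/-- An interval containing the support of the bump sees its full mass. -/
lemma integral_bump_eq {r c a b : ℝ} (hr : 0 ≤ r) (ha : a ≤ c - r) (hb : c + r ≤ b) :
    ∫ x in a..b, bump r c x = 4 / 3 * r ^ 3 := by
  have h1 : ∫ x in a..(c - r), bump r c x = 0 := by
    rw [intervalIntegral.integral_congr (g := fun _ => (0 : ℝ))]
    · simp
    · intro x hx
      rw [Set.uIcc_of_le ha] at hx
      exact bump_eq_zero hr (by rw [abs_sub_comm]; exact le_trans (by linarith [hx.2]) (le_abs_self _))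
  have h3 : ∫ x in (c + r)..b, bump r c x = 0 := by
    rw [intervalIntegral.integral_congr (g := fun _ => (0 : ℝ))]
    · simp
    · intro x hx
      rw [Set.uIcc_of_le hb] at hx
      exact bump_eq_zero hr (le_trans (by linarith [hx.1]) (le_abs_self _))
  have h2 : ∫ x in (c - r)..(c + r), bump r c x = 4 / 3 * r ^ 3 := by
    rw [intervalIntegral.integral_congr (g := fun x => (fun y : ℝ => r ^ 2 - y ^ 2) (x - c))]
    · rw [intervalIntegral.integral_comp_sub_right (fun y : ℝ => r ^ 2 - y ^ 2) c,
        intervalIntegral.integral_sub (by simp)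
          ((continuous_pow 2).intervalIntegrable _ _)]
      simp only [intervalIntegral.integral_const, integral_pow, smul_eq_mul]
      push_cast
      ring
    · intro x hx
      rw [Set.uIcc_of_le (by linarith)] at hx
      exact bump_eq (abs_le.2 ⟨by linarith [hx.1], by linarith [hx.2]⟩)
  rw [← intervalIntegral.integral_add_adjacent_intervals (b := c - r)
      (intervalIntegrable_bump r c _ _) (intervalIntegrable_bump r c _ _),
    ← intervalIntegral.integral_add_adjacent_intervals (a := c - r) (b := c + r)
      (intervalIntegrable_bump r c _ _) (intervalIntegrable_bump r c _ _), h1, h2, h3]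
  ring

lemma integral_bump_le {r a b : ℝ} (c : ℝ) (hr : 0 ≤ r) (hab : a ≤ b) :
    ∫ x in a..b, bump r c x ≤ 4 / 3 * r ^ 3 := by
  rw [← integral_bump_eq (c := c) hr (min_le_right a (c - r)) (le_max_right b (c + r))]
  exact intervalIntegral.integral_mono_interval (min_le_left _ _) hab (le_max_left _ _)
    (Filter.Eventually.of_forall fun x => bump_nonneg r c x) (intervalIntegrable_bump r c _ _)

lemma integral_sub_sum_bump (r a b : ℝ) (N : ℕ) (c : ℕ → ℝ) :
    ∫ x in a..b, (r ^ 2 - ∑ j ∈ Finset.range N, bump r (c j) x) =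
      r ^ 2 * (b - a) - ∑ j ∈ Finset.range N, ∫ x in a..b, bump r (c j) x := by
  rw [intervalIntegral.integral_sub (by simp)
      ((continuous_finsetSum _ fun j _ => continuous_bump r (c j)).intervalIntegrable _ _),
    intervalIntegral.integral_finsetSum fun j _ => intervalIntegrable_bump r (c j) a b]
  simp [mul_comm]

/-- The clipped integer is a natural number below `2 ^ k`, so there are at most `2 ^ k` levels. -/
lemma exists_level (k : ℕ) (m : ℤ) :
    ∃ j ∈ Finset.range (2 ^ k), max 0 (min m ((2 : ℤ) ^ k - 1)) = (j : ℤ) := by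
  have hpos : (0 : ℤ) < 2 ^ k := by positivity
  refine ⟨(max 0 (min m ((2 : ℤ) ^ k - 1))).toNat, ?_, ?_⟩
  · rw [Finset.mem_range]
    zify
    rw [Int.toNat_of_nonneg (le_max_left _ _)]
    exact max_lt hpos ((min_le_right _ _).trans_lt (by omega))
  · rw [Int.toNat_of_nonneg (le_max_left _ _)]

lemma exists_uniformQuant_eq (s z : ℝ) (k : ℕ) (x : ℝ) :
    ∃ j ∈ Finset.range (2 ^ k), uniformQuant s z k x = s * ((j : ℝ) - z) := by
  obtain ⟨j, hj, h⟩ := exists_level k ⌊x / s + z + 1 / 2⌋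
  exact ⟨j, hj, by rw [uniformQuant, h, Int.cast_natCast]⟩

lemma sub_sum_bump_le (r s z : ℝ) (k : ℕ) (x : ℝ) :
    r ^ 2 - ∑ j ∈ Finset.range (2 ^ k), bump r (s * ((j : ℝ) - z)) x ≤
      (uniformQuant s z k x - x) ^ 2 := by
  obtain ⟨j, hj, h⟩ := exists_uniformQuant_eq s z k x
  have h1 := Finset.single_le_sum (f := fun j : ℕ => bump r (s * ((j : ℝ) - z)) x)
    (fun i _ => bump_nonneg _ _ _) hj
  have h2 : r ^ 2 - (x - s * ((j : ℝ) - z)) ^ 2 ≤ bump r (s * ((j : ℝ) - z)) x :=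
    le_max_right _ _
  rw [h]
  linarith [sub_sq_comm x (s * ((j : ℝ) - z))]

lemma measurable_uniformQuant (s z : ℝ) (k : ℕ) : Measurable (uniformQuant s z k) := by
  have h1 : Measurable fun x : ℝ => ⌊x / s + z + 1 / 2⌋ :=
    Int.measurable_floor.comp (by fun_prop)
  have h2 : Measurable fun m : ℤ => s * (((max 0 (min m ((2 : ℤ) ^ k - 1)) : ℤ) : ℝ) - z) :=
    measurable_of_countable _
  exact h2.comp h1

lemma abs_uniformQuant_le {s : ℝ} (hs : 0 < s) (z : ℝ) (k : ℕ) (x : ℝ) :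
    |uniformQuant s z k x| ≤ s * (2 ^ k + |z|) := by
  obtain ⟨j, hj, h⟩ := exists_uniformQuant_eq s z k x
  have hj' : (j : ℝ) ≤ 2 ^ k := by exact_mod_cast (Finset.mem_range.1 hj).le
  rw [h, abs_mul, abs_of_pos hs]
  gcongr
  calc |(j : ℝ) - z| ≤ |(j : ℝ)| + |z| := abs_sub _ _
    _ ≤ 2 ^ k + |z| := by rw [Nat.abs_cast]; gcongr

lemma intervalIntegrable_error {s : ℝ} (hs : 0 < s) (z : ℝ) (k : ℕ) {a b : ℝ} (hab : a ≤ b) :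
    IntervalIntegrable (fun x => (uniformQuant s z k x - x) ^ 2) MeasureTheory.volume a b := by
  rw [intervalIntegrable_iff_integrableOn_Icc_of_le hab]
  refine MeasureTheory.Measure.integrableOn_of_bounded
    (M := (s * (2 ^ k + |z|) + (|a| + |b|)) ^ 2) (by simp)
    (((measurable_uniformQuant s z k).sub measurable_id).pow_const 2).aestronglyMeasurable ?_
  refine (MeasureTheory.ae_restrict_iff' measurableSet_Icc).2 (Filter.Eventually.of_forall ?_)
  intro x hx
  have hx' : |x| ≤ |a| + |b| :=
    abs_le.2 ⟨by linarith [neg_abs_le a, abs_nonneg b, hx.1],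
      by linarith [le_abs_self b, abs_nonneg a, hx.2]⟩
  rw [Real.norm_eq_abs, abs_pow]
  gcongr
  exact (abs_sub _ _).trans (add_le_add (abs_uniformQuant_le hs z k x) hx')

/-- For the cell-midpoint quantizer of `[a, a + 2 ^ k * s)`, whose zero-point is `-(a / s + 1 / 2)`,
the pointwise bound of `sub_sum_bump_le` with `r = s / 2` is an equality. -/
lemma uniformQuant_star_sq {s a : ℝ} (hs : 0 < s) (k : ℕ) {x : ℝ} (hax : a ≤ x)
    (hxb : x < a + 2 ^ k * s) :
    (uniformQuant s (-(a / s + 1 / 2)) k x - x) ^ 2 = (s / 2) ^ 2 -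
      ∑ j ∈ Finset.range (2 ^ k), bump (s / 2) (s * ((j : ℝ) - -(a / s + 1 / 2))) x := by
  have hlev (t : ℝ) : s * (t - -(a / s + 1 / 2)) = a + s * t + s / 2 := by
    field_simp; ring
  have harg : x / s + -(a / s + 1 / 2) + 1 / 2 = (x - a) / s := by ring
  have h0 : 0 ≤ ⌊(x - a) / s⌋ := Int.floor_nonneg.2 (div_nonneg (by linarith) hs.le)
  obtain ⟨i, hi⟩ := Int.eq_ofNat_of_zero_le h0
  have hlo : (i : ℝ) * s ≤ x - a := by
    have := Int.floor_le ((x - a) / s)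
    rw [hi, Int.cast_natCast] at this
    exact (le_div_iff₀ hs).1 this
  have hhi : x - a < ((i : ℝ) + 1) * s := by
    have := Int.lt_floor_add_one ((x - a) / s)
    rw [hi, Int.cast_natCast] at this
    exact (div_lt_iff₀ hs).1 this
  have hiN : i < 2 ^ k := by
    have h : (i : ℝ) < 2 ^ k := lt_of_mul_lt_mul_right (by linarith) hs.le
    exact_mod_cast h
  have hclip : max 0 (min (i : ℤ) ((2 : ℤ) ^ k - 1)) = (i : ℤ) := by
    have : (i : ℤ) < 2 ^ k := by exact_mod_cast hiN
    rw [min_eq_left (by omega), max_eq_right (by omega)]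
  have hQ : uniformQuant s (-(a / s + 1 / 2)) k x = a + s * i + s / 2 := by
    rw [uniformQuant, harg, hi, hclip, Int.cast_natCast, hlev]
  rw [hQ, Finset.sum_eq_single i]
  · rw [hlev, bump_eq (abs_le.2 ⟨by linarith, by linarith⟩)]
    ring
  · -- A level of another cell is at distance at least `s / 2` from `x`.
    intro j _ hji
    rw [hlev]
    refine bump_eq_zero (by linarith) ?_
    rcases lt_or_gt_of_ne hji with h | h
    · have h' : (j : ℝ) + 1 ≤ i := by exact_mod_cast h
      have := mul_le_mul_of_nonneg_right h' hs.le
      exact le_trans (by linarith) (le_abs_self _)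
    · have h' : (i : ℝ) + 1 ≤ j := by exact_mod_cast h
      have := mul_le_mul_of_nonneg_right h' hs.le
      exact le_trans (by linarith) (neg_le_abs _)
  · intro h
    exact absurd (Finset.mem_range.2 hiN) h

/-- The parameters `s* = (b-a)/2^k`, `z* = -(a/s* + 1/2)` minimize the expected squared
quantization error of a `k`-bit uniform quantizer over `x ∼ U(a,b)`. -/
theorem minmax_plus_optimal (a b : ℝ) (hab : a < b) (k : ℕ) (hk : 1 ≤ k)
    (sStar zStar : ℝ) (hs : sStar = (b - a) / 2 ^ k)
    (hz : zStar = -(a / sStar + 1 / 2)) :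
    ∀ s : ℝ, 0 < s → ∀ z : ℝ,
      (∫ x in a..b, (uniformQuant sStar zStar k x - x) ^ 2) ≤
        ∫ x in a..b, (uniformQuant s z k x - x) ^ 2 := by
  intro s hspos z
  have hstar : 0 < sStar := by rw [hs]; exact div_pos (by linarith) (by positivity)
  have hb : b = a + 2 ^ k * sStar := by rw [hs]; field_simp; ring
  have hr : 0 ≤ sStar / 2 := by linarith
  have hupper : ∫ x in a..b, (uniformQuant sStar zStar k x - x) ^ 2 =
      (sStar / 2) ^ 2 * (b - a) -
        ∑ _j ∈ Finset.range (2 ^ k), 4 / 3 * (sStar / 2) ^ 3 := by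
    -- The identity on cells holds on `[a, b)`; the endpoint `b` is a null set.
    have hae : ∀ᵐ x : ℝ, x ∈ Set.uIoc a b → (uniformQuant sStar zStar k x - x) ^ 2 =
        (sStar / 2) ^ 2 - ∑ j ∈ Finset.range (2 ^ k),
          bump (sStar / 2) (sStar * ((j : ℝ) - zStar)) x := by
      filter_upwards [MeasureTheory.Measure.ae_ne MeasureTheory.volume b] with x hxb hx
      rw [Set.uIoc_of_le hab.le] at hx
      rw [hz]
      exact uniformQuant_star_sq hstar k hx.1.le (hb ▸ lt_of_le_of_ne hx.2 hxb)
    rw [intervalIntegral.integral_congr_ae hae,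
      integral_sub_sum_bump _ _ _ _ fun j : ℕ => sStar * ((j : ℝ) - zStar)]
    congr 1
    refine Finset.sum_congr rfl fun j hj => ?_
    have hlev : sStar * ((j : ℝ) - zStar) = a + j * sStar + sStar / 2 := by
      rw [hz]; field_simp; ring
    have hj' : (j : ℝ) + 1 ≤ 2 ^ k := by exact_mod_cast Finset.mem_range.1 hj
    have h1 := mul_le_mul_of_nonneg_right hj' hstar.le
    have h2 : 0 ≤ (j : ℝ) * sStar := by positivity
    rw [hlev]
    exact integral_bump_eq hr (by linarith) (by linarith)
  rw [hupper]
  calc _ ≤ (sStar / 2) ^ 2 * (b - a) - ∑ j ∈ Finset.range (2 ^ k),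
          ∫ x in a..b, bump (sStar / 2) (s * ((j : ℝ) - z)) x := by
        gcongr
        exact integral_bump_le _ hr hab.le
    _ = ∫ x in a..b, ((sStar / 2) ^ 2 - ∑ j ∈ Finset.range (2 ^ k),
          bump (sStar / 2) (s * ((j : ℝ) - z)) x) :=
        (integral_sub_sum_bump _ _ _ _ fun j : ℕ => s * ((j : ℝ) - z)).symm
    _ ≤ _ := intervalIntegral.integral_mono_on hab.le
        ((continuous_const.sub (continuous_finsetSum _ fun j _ =>
          continuous_bump _ _)).intervalIntegrable _ _)
        (intervalIntegrable_error hspos z k hab.le)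
        fun x _ => sub_sum_bump_le _ s z k x
end

section
/- Let a < b be real numbers, N ≥ 1 a natural number, a = b_0 ≤ b_1 ≤ … ≤ b_N = b a partition of [a, b], and q_0, …, q_{N−1} arbitrary real numbers. Then Σ_{i=0}^{N−1} ∫_{b_i}^{b_{i+1}} (x − q_i)² dx ≥ (b − a)³ / (12 N²). -/
open scoped BigOperators

/-!
On a cell `[u, v]` of length `h` the squared error splits as `h ^ 3 / 12 + h * (m - c) ^ 2`, where
`m` is the midpoint and `c` the representative, so it is at least `h ^ 3 / 12`
(`cell_error_ge`). The cell lengths are nonnegative and add up to `b - a`, so by the power mean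
inequality (convexity of the cube) the sum of their cubes is at least `(b - a) ^ 3 / N ^ 2`.
-/

theorem cell_error_ge {u v : ℝ} (huv : u ≤ v) (c : ℝ) :
    (v - u) ^ 3 / 12 ≤ ∫ x in u..v, (x - c) ^ 2 := by
  have hsplit : ∫ x in u..v, (x - c) ^ 2
      = (v - u) ^ 3 / 12 + (v - u) * ((u + v) / 2 - c) ^ 2 := by
    rw [intervalIntegral.integral_comp_sub_right (fun x => x ^ 2) c, integral_pow]
    push_cast
    ring
  rw [hsplit]
  exact le_add_of_nonneg_right (mul_nonneg (sub_nonneg.2 huv) (sq_nonneg _))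

/-- Lower bound on the total squared error of any `N`-level interval-based quantizer of
`[a, b]`: for any partition `a = p 0 ≤ p 1 ≤ ⋯ ≤ p N = b` and any representatives
`q i`, the total squared error is at least `(b - a)^3 / (12 N^2)`. -/
theorem partition_quantizer_lower_bound (a b : ℝ) (hab : a < b) (N : ℕ) (hN : 1 ≤ N)
    (p : ℕ → ℝ) (hp0 : p 0 = a) (hpN : p N = b)
    (hmono : ∀ i < N, p i ≤ p (i + 1)) (q : ℕ → ℝ) :
    (b - a) ^ 3 / (12 * (N : ℝ) ^ 2) ≤
      ∑ i ∈ Finset.range N, ∫ x in (p i)..(p (i + 1)), (x - q i) ^ 2 := by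
  have hcubes : (b - a) ^ 3 / (N : ℝ) ^ 2 ≤ ∑ i ∈ Finset.range N, (p (i + 1) - p i) ^ 3 := by
    have h := pow_sum_div_card_le_sum_pow (s := Finset.range N) (f := fun i => p (i + 1) - p i)
      (fun i hi => sub_nonneg.2 (hmono i (Finset.mem_range.1 hi))) 2
    rwa [Finset.sum_range_sub, hp0, hpN, Finset.card_range] at h
  calc (b - a) ^ 3 / (12 * (N : ℝ) ^ 2)
      = (b - a) ^ 3 / (N : ℝ) ^ 2 / 12 := by rw [div_div, mul_comm]
    _ ≤ (∑ i ∈ Finset.range N, (p (i + 1) - p i) ^ 3) / 12 := by gcongr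
    _ = ∑ i ∈ Finset.range N, (p (i + 1) - p i) ^ 3 / 12 := Finset.sum_div _ _ _
    _ ≤ _ := Finset.sum_le_sum fun i hi => cell_error_ge (hmono i (Finset.mem_range.1 hi)) (q i)
end

section
/- Let k ≥ 1, h ≥ 0, and x ∈ ℝ. Define L(z) = h·(x + z − clip(⌊x + z⌉, 0, 2^k − 1))² and the surrogate L^S(z) = h·(x + z)² for z < −1/2 − x, L^S(z) = h/4 for −1/2 − x ≤ z < 2^k − 1/2 − x, and L^S(z) = h·(x + z − (2^k − 1))² for z ≥ 2^k − 1/2 − x. Then L(z) ≤ L^S(z) for every z ∈ ℝ, and L(z) = L^S(z) whenever z < −1/2 − x or z ≥ 2^k − 1/2 − x. -/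
/-!
Put `y = x + z` and `n = ⌊y + 1/2⌋`. The three branches of the surrogate are exactly the three
regimes of the clip: `n < 0` iff `y < -1/2`, and `n > 2^k - 1` iff `y ≥ 2^k - 1/2`. In the two outer
regimes the clip saturates at an endpoint, so the losses agree; in the middle one the clip is
inactive and the rounding error satisfies `|y - n| ≤ 1/2`, so the loss is at most `h/4`.
-/

/-- The surrogate loss `L^S` upper-bounds the per-sample zero-point loss `L`, with
equality outside the low-loss interval `[-1/2 - x, 2^k - 1/2 - x)`. -/
theorem surrogate_loss_bound (k : ℕ) (hk : 1 ≤ k) (h : ℝ) (hh : 0 ≤ h) (x : ℝ)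
    (L LS : ℝ → ℝ)
    (hL : ∀ z, L z = h * (x + z - ↑(max 0 (min (⌊x + z + 1/2⌋) ((2 : ℤ) ^ k - 1)))) ^ 2)
    (hLS : ∀ z, LS z =
      if z < -(1 / 2) - x then h * (x + z) ^ 2
      else if z < (2 : ℝ) ^ k - 1 / 2 - x then h / 4
      else h * (x + z - ((2 : ℝ) ^ k - 1)) ^ 2) :
    (∀ z, L z ≤ LS z) ∧
    (∀ z, z < -(1 / 2) - x ∨ (2 : ℝ) ^ k - 1 / 2 - x ≤ z → L z = LS z) := by
  have low : ∀ z, z < -(1 / 2) - x → L z = LS z := by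
    intro z hz
    have hn : ⌊x + z + 1 / 2⌋ < 0 := Int.floor_lt.2 (by push_cast; linarith)
    rw [hL, hLS, if_pos hz, max_eq_left ((min_le_left _ _).trans hn.le)]
    simp
  have one_le : (1 : ℤ) ≤ 2 ^ k := one_le_pow₀ (by norm_num)
  have one_le_real : (1 : ℝ) ≤ 2 ^ k := one_le_pow₀ (by norm_num)
  have high : ∀ z, (2 : ℝ) ^ k - 1 / 2 - x ≤ z → L z = LS z := by
    intro z hz
    have hn : (2 : ℤ) ^ k ≤ ⌊x + z + 1 / 2⌋ := Int.le_floor.2 (by push_cast; linarith)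
    rw [hL, hLS, if_neg (by linarith), if_neg (by linarith), min_eq_right (by linarith),
      max_eq_right (by linarith)]
    push_cast
    rfl
  refine ⟨fun z => ?_, fun z hz => hz.elim (low z) (high z)⟩
  rcases lt_or_ge z (-(1 / 2) - x) with h1 | h1
  · exact (low z h1).le
  rcases lt_or_ge z ((2 : ℝ) ^ k - 1 / 2 - x) with h2 | h2
  · have hn0 : 0 ≤ ⌊x + z + 1 / 2⌋ := Int.floor_nonneg.2 (by linarith)
    have hn1 : ⌊x + z + 1 / 2⌋ < 2 ^ k := Int.floor_lt.2 (by push_cast; linarith)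
    rw [hL, hLS, if_neg h1.not_gt, if_pos h2, min_eq_left (by linarith), max_eq_right hn0]
    have hle := Int.floor_le (x + z + 1 / 2)
    have hlt := Int.lt_floor_add_one (x + z + 1 / 2)
    have hsq : (x + z - (⌊x + z + 1 / 2⌋ : ℝ)) ^ 2 ≤ 1 / 4 := by nlinarith
    linarith [mul_le_mul_of_nonneg_left hsq hh]
  · exact (high z h2).le
end

section
/- Let w_min < w_max be real numbers and k ≥ 1 a natural number. Set s = (w_max − w_min)/2^k and z = −(w_min/s + 1/2) (the Min-Max+ initialization). Then for every x ∈ [w_min, w_max], |Q_{s,z}(x) − x| ≤ s/2. -/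
/-- Under the Min-Max+ initialization `s = (w_max − w_min)/2^k`,
`z = −(w_min/s + 1/2)`, every `x ∈ [w_min, w_max]` is quantized with absolute
error at most `s/2`. -/
theorem minmax_plus_error_le_half_scale (wmin wmax : ℝ) (hw : wmin < wmax)
    (k : ℕ) (hk : 1 ≤ k) (s z : ℝ) (hs : s = (wmax - wmin) / 2 ^ k)
    (hz : z = -(wmin / s + 1 / 2)) (x : ℝ) (hx1 : wmin ≤ x) (hx2 : x ≤ wmax) :
    |uniformQuant s z k x - x| ≤ s / 2 := by
  have h2 : (0 : ℝ) < 2 ^ k := by positivity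
  have hs0 : 0 < s := by
    rw [hs]
    exact div_pos (sub_pos.mpr hw) h2
  have hsk : s * 2 ^ k = wmax - wmin := by
    rw [hs]
    field_simp
  obtain ⟨t, ht⟩ : ∃ t, t = (x - wmin) / s := ⟨_, rfl⟩
  have hx : x = s * t + wmin := by
    rw [ht]
    field_simp
    ring
  have ht0 : 0 ≤ t := by
    rw [ht]
    exact div_nonneg (sub_nonneg.mpr hx1) hs0.le
  have htk : t ≤ 2 ^ k := by
    rw [ht, div_le_iff₀ hs0]
    linarith
  have harg : x / s + z + 1 / 2 = t := by
    rw [hz, ht]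
    ring
  have hsz : s * z = -wmin - s / 2 := by
    rw [hz]
    field_simp
    ring
  -- clipping preserves `t ≤ c + 1` because `t ≤ 2 ^ k`
  obtain ⟨c, hc, hct, htc⟩ : ∃ c : ℤ, max 0 (min ⌊t⌋ ((2 : ℤ) ^ k - 1)) = c ∧
      (c : ℝ) ≤ t ∧ t ≤ c + 1 := by
    have hf0 : 0 ≤ ⌊t⌋ := Int.floor_nonneg.mpr ht0
    have hp : (1 : ℤ) ≤ 2 ^ k := one_le_pow₀ (by norm_num)
    refine ⟨min ⌊t⌋ ((2 : ℤ) ^ k - 1), max_eq_right (le_min hf0 (by linarith)), ?_, ?_⟩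
    · exact (Int.cast_le.mpr (min_le_left _ _)).trans (Int.floor_le t)
    · rcases min_choice ⌊t⌋ ((2 : ℤ) ^ k - 1) with h | h <;> rw [h]
      · exact (Int.lt_floor_add_one t).le
      · push_cast
        linarith
  unfold uniformQuant
  rw [harg, hc, abs_le]
  have h1 := mul_le_mul_of_nonneg_left hct hs0.le
  have h3 := mul_le_mul_of_nonneg_left htc hs0.le
  constructor <;> nlinarith
end
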